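/- arXiv:1909.06155 — 4 statements merged into one kernel-verified Lean document; each statement's English description precedes it below -/
import Mathlib

section
/- For every real θ > 0 and every H ∈ (0,1), θ² ∫₀^∞ ∫₀^∞ e^{-θs} e^{-θt} · (1/2)(s^{2H} + t^{2H} − |t−s|^{2H}) ds dt = H Γ(2H) / θ^{2H}. (This is the variance of the limit random variable ζ_{B^H,∞} = θ ∫₀^∞ e^{-θs} B^H_s ds, computed from the covariance function (1/2)(s^{2H}+t^{2H}−|t−s|^{2H}) of fractional Brownian motion.) -/
open MeasureTheory Filter Set

/-!
A process started at `0` with stationary increments and variance function `v` has covariance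
`(v s + v t - v |t - s|) / 2`. Let `L` be the Laplace transform of `v` at `θ`. Against the weight
`e^{-θs} e^{-θt}`, each of `v s` and `v t` integrates to `L / θ` by Fubini. Cutting the quadrant
along the diagonal and substituting `t = s + u` (or `s = t + u`) turns `e^{-θs} e^{-θt} v |t - s|`
into `e^{-2θs} e^{-θu} v u` on each half, so this term contributes `2 · L / (2θ) = L / θ`. The
double integral is therefore `L / (2θ)`, and `v u = u ^ α` gives `L = Γ(α + 1) / θ ^ (α + 1)`.
-/

section Product

variable {α β : Type*} [MeasurableSpace α] [MeasurableSpace β]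

theorem prod_diagonal_eq_zero [MeasurableEq α] (μ ν : Measure α) [SFinite ν]
    [NullSingletonClass ν] :
    μ.prod ν (diagonal α) = 0 := by
  refine Measure.measure_prod_null_of_ae_null measurableSet_diagonal (.of_forall fun x ↦ ?_)
  exact Subsingleton.measure_zero (fun y hy z hz ↦ Eq.trans (Eq.symm hy) hz) ν

theorem integrableOn_prod_mul {L : Type*} [NormedRing L] {μ : Measure α} {ν : Measure β}
    [SFinite μ] [SFinite ν] {s : Set α} {t : Set β} {f : α → L} {g : β → L}
    (hf : IntegrableOn f s μ) (hg : IntegrableOn g t ν) :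
    IntegrableOn (fun p : α × β ↦ f p.1 * g p.2) (s ×ˢ t) (μ.prod ν) := by
  rw [IntegrableOn, ← Measure.prod_restrict]
  exact Integrable.mul_prod hf hg

end Product

section Quadrant

theorem volume_restrict_quadrant :
    volume.restrict (Ioi (0 : ℝ) ×ˢ Ioi (0 : ℝ)) =
      volume.restrict {p : ℝ × ℝ | 0 < p.1 ∧ p.1 < p.2} +
        volume.restrict {p : ℝ × ℝ | 0 < p.2 ∧ p.2 < p.1} := by
  have hdisj : Disjoint {p : ℝ × ℝ | 0 < p.1 ∧ p.1 < p.2} {p : ℝ × ℝ | 0 < p.2 ∧ p.2 < p.1} :=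
    disjoint_left.2 fun _ hp hp' ↦ hp.2.asymm hp'.2
  have hmeas : MeasurableSet {p : ℝ × ℝ | 0 < p.2 ∧ p.2 < p.1} := by measurability
  rw [← Measure.restrict_union hdisj hmeas]
  refine Measure.restrict_congr_set ?_
  have hdiag : ∀ᵐ p : ℝ × ℝ, p ∉ diagonal ℝ :=
    measure_eq_zero_iff_ae_notMem.1 (prod_diagonal_eq_zero volume volume)
  filter_upwards [hdiag] with p hp
  have hne : p.1 ≠ p.2 := hp
  refine propext (?_ : (0 < p.1 ∧ 0 < p.2) ↔ (0 < p.1 ∧ p.1 < p.2) ∨ (0 < p.2 ∧ p.2 < p.1))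
  grind

theorem measurableEmbedding_shear : MeasurableEmbedding fun p : ℝ × ℝ ↦ (p.1, p.1 + p.2) :=
  (MeasurableEquiv.shearAddRight ℝ).measurableEmbedding

theorem measurableEmbedding_shear_swap : MeasurableEmbedding fun p : ℝ × ℝ ↦ (p.1 + p.2, p.1) :=
  MeasurableEquiv.prodComm.measurableEmbedding.comp measurableEmbedding_shear

theorem measurePreserving_shear_quadrant :
    MeasurePreserving (fun p : ℝ × ℝ ↦ (p.1, p.1 + p.2))
      (volume.restrict (Ioi (0 : ℝ) ×ˢ Ioi (0 : ℝ)))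
      (volume.restrict {p | 0 < p.1 ∧ p.1 < p.2}) := by
  have h := (measurePreserving_prod_add (volume : Measure ℝ) volume).restrict_preimage_emb
    measurableEmbedding_shear {p | 0 < p.1 ∧ p.1 < p.2}
  have hpre : (fun p : ℝ × ℝ ↦ (p.1, p.1 + p.2)) ⁻¹' {p | 0 < p.1 ∧ p.1 < p.2} =
      Ioi 0 ×ˢ Ioi 0 := by
    ext p
    exact and_congr_right' (lt_add_iff_pos_right p.1)
  rwa [hpre] at h

theorem measurePreserving_shear_swap_quadrant :
    MeasurePreserving (fun p : ℝ × ℝ ↦ (p.1 + p.2, p.1))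
      (volume.restrict (Ioi (0 : ℝ) ×ˢ Ioi (0 : ℝ)))
      (volume.restrict {p | 0 < p.2 ∧ p.2 < p.1}) :=
  ((Measure.measurePreserving_swap (μ := (volume : Measure ℝ)) (ν := volume)).restrict_preimage_emb
    MeasurableEquiv.prodComm.measurableEmbedding {p | 0 < p.2 ∧ p.2 < p.1}).comp
    measurePreserving_shear_quadrant

variable {E : Type*} [NormedAddCommGroup E] {f : ℝ × ℝ → E}

theorem integrableOn_quadrant_iff :
    IntegrableOn f (Ioi 0 ×ˢ Ioi 0) ↔
      IntegrableOn (fun p ↦ f (p.1, p.1 + p.2)) (Ioi 0 ×ˢ Ioi 0) ∧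
        IntegrableOn (fun p ↦ f (p.1 + p.2, p.1)) (Ioi 0 ×ˢ Ioi 0) := by
  rw [IntegrableOn, volume_restrict_quadrant, integrable_add_measure,
    ← measurePreserving_shear_quadrant.integrable_comp_emb measurableEmbedding_shear,
    ← measurePreserving_shear_swap_quadrant.integrable_comp_emb measurableEmbedding_shear_swap]
  rfl

theorem setIntegral_quadrant [NormedSpace ℝ E] (hf : IntegrableOn f (Ioi 0 ×ˢ Ioi 0)) :
    ∫ p in Ioi 0 ×ˢ Ioi 0, f p =
      (∫ p in Ioi 0 ×ˢ Ioi 0, f (p.1, p.1 + p.2)) +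
        ∫ p in Ioi 0 ×ˢ Ioi 0, f (p.1 + p.2, p.1) := by
  rw [IntegrableOn, volume_restrict_quadrant, integrable_add_measure] at hf
  rw [measurePreserving_shear_quadrant.integral_comp measurableEmbedding_shear,
    measurePreserving_shear_swap_quadrant.integral_comp measurableEmbedding_shear_swap,
    ← integral_add_measure hf.1 hf.2, ← volume_restrict_quadrant]

end Quadrant

section Laplace

variable {θ : ℝ}

theorem integrableOn_rpow_mul_exp_neg_mul {α : ℝ} (hα : -1 < α) (hθ : 0 < θ) :
    IntegrableOn (fun u : ℝ ↦ u ^ α * Real.exp (-θ * u)) (Ioi 0) := by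
  simpa only [Real.rpow_one] using integrableOn_rpow_mul_exp_neg_mul_rpow hα one_pos hθ

theorem setIntegral_rpow_mul_exp_neg_mul {α : ℝ} (hα : -1 < α) (hθ : 0 < θ) :
    ∫ u in Ioi (0 : ℝ), u ^ α * Real.exp (-θ * u) = Real.Gamma (α + 1) / θ ^ (α + 1) := by
  have h := Real.integral_rpow_mul_exp_neg_mul_Ioi (by linarith : 0 < α + 1) hθ
  simp only [add_sub_cancel_right, one_div, Real.inv_rpow hθ.le, ← neg_mul] at h
  rw [h, inv_mul_eq_div]

theorem setIntegral_exp_neg_mul (hθ : 0 < θ) : ∫ u in Ioi (0 : ℝ), Real.exp (-θ * u) = 1 / θ := by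
  rw [integral_exp_mul_Ioi (neg_lt_zero.2 hθ), mul_zero, Real.exp_zero, neg_div_neg_eq]

variable {v : ℝ → ℝ}

theorem exp_mul_exp_mul_comp_abs_sub_shear (v : ℝ → ℝ) {p : ℝ × ℝ} (hp : p ∈ Ioi 0 ×ˢ Ioi 0) :
    Real.exp (-θ * p.1) * Real.exp (-θ * (p.1 + p.2)) * v |p.1 + p.2 - p.1| =
      Real.exp (-(2 * θ) * p.1) * (v p.2 * Real.exp (-θ * p.2)) := by
  have hexp : Real.exp (-θ * p.1) * Real.exp (-θ * (p.1 + p.2)) =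
      Real.exp (-(2 * θ) * p.1) * Real.exp (-θ * p.2) := by
    simp only [← Real.exp_add]
    ring_nf
  rw [hexp, add_sub_cancel_left, abs_of_pos (mem_Ioi.1 hp.2), mul_assoc, mul_comm (v p.2)]

theorem exp_mul_exp_mul_comp_abs_sub_shear_swap (v : ℝ → ℝ) {p : ℝ × ℝ}
    (hp : p ∈ Ioi 0 ×ˢ Ioi 0) :
    Real.exp (-θ * (p.1 + p.2)) * Real.exp (-θ * p.1) * v |p.1 - (p.1 + p.2)| =
      Real.exp (-(2 * θ) * p.1) * (v p.2 * Real.exp (-θ * p.2)) := by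
  rw [mul_comm (Real.exp _), abs_sub_comm, exp_mul_exp_mul_comp_abs_sub_shear v hp]

theorem integrableOn_exp_mul_exp_mul_comp_abs_sub (hθ : 0 < θ)
    (hv : IntegrableOn (fun u ↦ v u * Real.exp (-θ * u)) (Ioi 0)) :
    IntegrableOn (fun p : ℝ × ℝ ↦ Real.exp (-θ * p.1) * Real.exp (-θ * p.2) * v |p.2 - p.1|)
      (Ioi 0 ×ˢ Ioi 0) := by
  have hprod := integrableOn_prod_mul
    (integrableOn_exp_mul_Ioi (neg_lt_zero.2 (mul_pos two_pos hθ)) 0) hv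
  have hQ : MeasurableSet (Ioi (0 : ℝ) ×ˢ Ioi (0 : ℝ)) := measurableSet_Ioi.prod measurableSet_Ioi
  exact integrableOn_quadrant_iff.2
    ⟨hprod.congr_fun (fun _ hp ↦ (exp_mul_exp_mul_comp_abs_sub_shear v hp).symm) hQ,
      hprod.congr_fun (fun _ hp ↦ (exp_mul_exp_mul_comp_abs_sub_shear_swap v hp).symm) hQ⟩

theorem setIntegral_exp_mul_exp_mul_comp_abs_sub (hθ : 0 < θ)
    (hv : IntegrableOn (fun u ↦ v u * Real.exp (-θ * u)) (Ioi 0)) :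
    ∫ p in Ioi (0 : ℝ) ×ˢ Ioi (0 : ℝ),
        Real.exp (-θ * p.1) * Real.exp (-θ * p.2) * v |p.2 - p.1| =
      1 / θ * ∫ u in Ioi (0 : ℝ), v u * Real.exp (-θ * u) := by
  have hQ : MeasurableSet (Ioi (0 : ℝ) ×ˢ Ioi (0 : ℝ)) := measurableSet_Ioi.prod measurableSet_Ioi
  rw [setIntegral_quadrant (integrableOn_exp_mul_exp_mul_comp_abs_sub hθ hv),
    setIntegral_congr_fun hQ fun _ hp ↦ exp_mul_exp_mul_comp_abs_sub_shear v hp,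
    setIntegral_congr_fun hQ fun _ hp ↦ exp_mul_exp_mul_comp_abs_sub_shear_swap v hp,
    Measure.volume_eq_prod,
    setIntegral_prod_mul (fun s ↦ Real.exp (-(2 * θ) * s)) fun u ↦ v u * Real.exp (-θ * u),
    setIntegral_exp_neg_mul (mul_pos two_pos hθ)]
  ring

theorem setIntegral_exp_mul_exp_mul_stationaryIncrements (hθ : 0 < θ)
    (hv : IntegrableOn (fun u ↦ v u * Real.exp (-θ * u)) (Ioi 0)) :
    ∫ p in Ioi (0 : ℝ) ×ˢ Ioi (0 : ℝ), Real.exp (-θ * p.1) * Real.exp (-θ * p.2) *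
        ((1 / 2) * (v p.1 + v p.2 - v |p.2 - p.1|)) =
      1 / (2 * θ) * ∫ u in Ioi (0 : ℝ), v u * Real.exp (-θ * u) := by
  have hexp := integrableOn_exp_mul_Ioi (neg_lt_zero.2 hθ) 0
  have hfst : IntegrableOn (fun p : ℝ × ℝ ↦ v p.1 * Real.exp (-θ * p.1) * Real.exp (-θ * p.2))
      (Ioi 0 ×ˢ Ioi 0) := integrableOn_prod_mul hv hexp
  have hsnd : IntegrableOn (fun p : ℝ × ℝ ↦ Real.exp (-θ * p.1) * (v p.2 * Real.exp (-θ * p.2)))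
      (Ioi 0 ×ˢ Ioi 0) := integrableOn_prod_mul hexp hv
  have hsplit (p : ℝ × ℝ) : Real.exp (-θ * p.1) * Real.exp (-θ * p.2) *
        ((1 / 2) * (v p.1 + v p.2 - v |p.2 - p.1|)) =
      1 / 2 * (v p.1 * Real.exp (-θ * p.1) * Real.exp (-θ * p.2) +
        Real.exp (-θ * p.1) * (v p.2 * Real.exp (-θ * p.2)) -
        Real.exp (-θ * p.1) * Real.exp (-θ * p.2) * v |p.2 - p.1|) := by ring
  simp only [hsplit]
  rw [integral_const_mul,
    integral_sub (hfst.fun_add hsnd) (integrableOn_exp_mul_exp_mul_comp_abs_sub hθ hv),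
    integral_add hfst hsnd, setIntegral_exp_mul_exp_mul_comp_abs_sub hθ hv,
    Measure.volume_eq_prod,
    setIntegral_prod_mul (fun s ↦ v s * Real.exp (-θ * s)) fun t ↦ Real.exp (-θ * t),
    setIntegral_prod_mul (fun s ↦ Real.exp (-θ * s)) fun t ↦ v t * Real.exp (-θ * t),
    setIntegral_exp_neg_mul hθ]
  ring

end Laplace

theorem variance_zeta_fBm_general {θ H : ℝ} (hθ : 0 < θ) (hH : -1 / 2 < H) :
    θ ^ 2 * ∫ p in Ioi (0 : ℝ) ×ˢ Ioi (0 : ℝ), Real.exp (-θ * p.1) * Real.exp (-θ * p.2) *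
        ((1 / 2) * (p.1 ^ (2 * H) + p.2 ^ (2 * H) - |p.2 - p.1| ^ (2 * H))) =
      Real.Gamma (2 * H + 1) / (2 * θ ^ (2 * H)) := by
  have hα : -1 < 2 * H := by linarith
  rw [setIntegral_exp_mul_exp_mul_stationaryIncrements (v := (· ^ (2 * H))) hθ
      (integrableOn_rpow_mul_exp_neg_mul hα hθ),
    setIntegral_rpow_mul_exp_neg_mul hα hθ, Real.rpow_add_one hθ.ne']
  field_simp

theorem variance_zeta_fBm (θ H : ℝ) (hθ : 0 < θ) (hH : H ∈ Set.Ioo (0:ℝ) 1) :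
    θ ^ 2 * ∫ p in Set.Ioi (0:ℝ) ×ˢ Set.Ioi (0:ℝ),
        Real.exp (-θ * p.1) * Real.exp (-θ * p.2) *
          ((1 / 2) * (p.1 ^ (2 * H) + p.2 ^ (2 * H) - |p.2 - p.1| ^ (2 * H)))
      = H * Real.Gamma (2 * H) / θ ^ (2 * H) := by
  rw [variance_zeta_fBm_general hθ (by linarith [hH.1]), Real.Gamma_add_one (by linarith [hH.1]),
    mul_assoc, mul_div_mul_left _ _ two_ne_zero]
end

section
/- Let θ > 0 and μ ∈ ℝ, let ζ : [0,∞) → ℝ be a continuous function with ζ_0 = 0 that converges to a limit ζ_∞ as t → ∞, and define X_t = μ(e^{θt} − 1) + e^{θt} ζ_t for t ≥ 0. Then e^{-2θT} ∫₀^T X_s² ds → (μ + ζ_∞)²/(2θ) as T → ∞. -/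
open MeasureTheory Filter Set

/-!
The ratio `X s ^ 2 / exp (2 * θ * s)` converges to `(μ + ζinf) ^ 2`. The weight `exp (2 * θ * s)`
has divergent integral, so averages against it only see the behaviour of this ratio at infinity
(the continuous Cesàro lemma), and `∫ s in 0..T, exp (2 * θ * s) ∼ exp (2 * θ * T) / (2 * θ)`.
-/

open Asymptotics Topology

section WeightedMean

variable {E : Type*} [NormedAddCommGroup E] {ν : Measure ℝ} {a : ℝ}

theorem intervalIntegrable_of_locallyIntegrableOn_Ici {f : ℝ → E}
    (hf : LocallyIntegrableOn f (Ici a) ν) {b c : ℝ} (hb : a ≤ b) (hc : a ≤ c) :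
    IntervalIntegrable f ν b c :=
  (hf.integrableOn_compact_subset (fun _ hx => (le_min hb hc).trans hx.1)
    isCompact_uIcc).intervalIntegrable

variable [NormedSpace ℝ E]

theorem isLittleO_intervalIntegral {f : ℝ → E} {g : ℝ → ℝ}
    (hf : LocallyIntegrableOn f (Ici a) ν) (hg : LocallyIntegrableOn g (Ici a) ν)
    (hg_nonneg : ∀ s, a ≤ s → 0 ≤ g s) (hfg : f =o[atTop] g)
    (hg_top : Tendsto (fun T => ∫ s in a..T, g s ∂ν) atTop atTop) :
    (fun T => ∫ s in a..T, f s ∂ν) =o[atTop] fun T => ∫ s in a..T, g s ∂ν := by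
  refine isLittleO_iff.2 fun ε hε => ?_
  obtain ⟨N, haN, hN⟩ : ∃ N, a ≤ N ∧ ∀ s, N ≤ s → ‖f s‖ ≤ ε / 2 * g s := by
    obtain ⟨N, hN⟩ := eventually_atTop.1
      ((hfg.def (half_pos hε)).and (eventually_ge_atTop a))
    refine ⟨N, (hN N le_rfl).2, fun s hs => ?_⟩
    simpa only [Real.norm_of_nonneg (hg_nonneg s (hN s hs).2)] using (hN s hs).1
  have head_le : ∀ᶠ T in atTop, ‖∫ s in a..N, f s ∂ν‖ ≤ ε / 2 * ∫ s in a..T, g s ∂ν :=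
    (hg_top.const_mul_atTop (half_pos hε)).eventually_ge_atTop _
  filter_upwards [head_le, eventually_ge_atTop N] with T hhead hNT
  have haT : a ≤ T := haN.trans hNT
  have hg_int {b c : ℝ} (hb : a ≤ b) (hc : a ≤ c) : IntervalIntegrable g ν b c :=
    intervalIntegrable_of_locallyIntegrableOn_Ici hg hb hc
  have tail_le : ‖∫ s in N..T, f s ∂ν‖ ≤ ε / 2 * ∫ s in a..T, g s ∂ν :=
    calc ‖∫ s in N..T, f s ∂ν‖ ≤ ∫ s in N..T, ε / 2 * g s ∂ν :=
          intervalIntegral.norm_integral_le_of_norm_le hNT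
            (ae_of_all _ fun s hs => hN s hs.1.le) ((hg_int haN haT).const_mul _)
      _ = ε / 2 * ∫ s in N..T, g s ∂ν := intervalIntegral.integral_const_mul _ _
      _ ≤ ε / 2 * ∫ s in a..T, g s ∂ν := by
          gcongr
          refine intervalIntegral.integral_mono_interval haN hNT le_rfl ?_ (hg_int le_rfl haT)
          exact (ae_restrict_iff' measurableSet_Ioc).2
            (ae_of_all _ fun s hs => hg_nonneg s hs.1.le)
  calc ‖∫ s in a..T, f s ∂ν‖ = ‖(∫ s in a..N, f s ∂ν) + ∫ s in N..T, f s ∂ν‖ := by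
        rw [intervalIntegral.integral_add_adjacent_intervals
          (intervalIntegrable_of_locallyIntegrableOn_Ici hf le_rfl haN)
          (intervalIntegrable_of_locallyIntegrableOn_Ici hf haN haT)]
    _ ≤ ‖∫ s in a..N, f s ∂ν‖ + ‖∫ s in N..T, f s ∂ν‖ := norm_add_le _ _
    _ ≤ ε / 2 * (∫ s in a..T, g s ∂ν) + ε / 2 * ∫ s in a..T, g s ∂ν := add_le_add hhead tail_le
    _ = ε * ∫ s in a..T, g s ∂ν := by ring
    _ ≤ ε * ‖∫ s in a..T, g s ∂ν‖ := by gcongr; exact Real.le_norm_self _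

theorem tendsto_inv_integral_smul_integral_smul [CompleteSpace E] {w : ℝ → ℝ} {h : ℝ → E} {L : E}
    (hw : LocallyIntegrableOn w (Ici a) ν)
    (hwh : LocallyIntegrableOn (fun s => w s • h s) (Ici a) ν)
    (hw_nonneg : ∀ s, a ≤ s → 0 ≤ w s)
    (hw_top : Tendsto (fun T => ∫ s in a..T, w s ∂ν) atTop atTop)
    (hh : Tendsto h atTop (𝓝 L)) :
    Tendsto (fun T => (∫ s in a..T, w s ∂ν)⁻¹ • ∫ s in a..T, w s • h s ∂ν) atTop (𝓝 L) := by
  have hwL : LocallyIntegrableOn (fun s => w s • L) (Ici a) ν := fun s hs =>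
    (hw s hs).imp fun _ ht => ⟨ht.1, ht.2.smul_const L⟩
  have herr : (fun s => w s • h s - w s • L) =o[atTop] w := by
    have hsub : (fun s => h s - L) =o[atTop] fun _ => (1 : ℝ) :=
      (isLittleO_one_iff ℝ).2 (tendsto_sub_nhds_zero_iff.2 hh)
    simpa only [smul_sub, smul_eq_mul, mul_one] using (isBigO_refl w atTop).smul_isLittleO hsub
  have hquot := (isLittleO_intervalIntegral (hwh.sub hwL) hw hw_nonneg herr
    hw_top).tendsto_inv_smul_nhds_zero
  refine tendsto_sub_nhds_zero_iff.1 (hquot.congr' ?_)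
  filter_upwards [hw_top.eventually_gt_atTop 0, eventually_ge_atTop a] with T hpos haT
  simp only [Pi.sub_apply]
  rw [intervalIntegral.integral_sub
      (intervalIntegrable_of_locallyIntegrableOn_Ici hwh le_rfl haT)
      (intervalIntegrable_of_locallyIntegrableOn_Ici hwL le_rfl haT),
    intervalIntegral.integral_smul_const, smul_sub, inv_smul_smul₀ hpos.ne']

end WeightedMean

section Exponential

theorem exp_neg_mul_mul_exp_mul (k t : ℝ) : Real.exp (-k * t) * Real.exp (k * t) = 1 := by
  rw [← Real.exp_add, neg_mul, neg_add_cancel, Real.exp_zero]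

variable {k : ℝ}

theorem tendsto_exp_neg_mul_atTop (hk : 0 < k) :
    Tendsto (fun t => Real.exp (-k * t)) atTop (𝓝 0) :=
  Real.tendsto_exp_atBot.comp (tendsto_id.const_mul_atTop_of_neg (neg_lt_zero.2 hk))

theorem tendsto_exp_neg_mul_integral_exp_mul (hk : 0 < k) (a : ℝ) :
    Tendsto (fun T => Real.exp (-k * T) * ∫ s in a..T, Real.exp (k * s)) atTop (𝓝 k⁻¹) := by
  have hformula (T : ℝ) : Real.exp (-k * T) * ∫ s in a..T, Real.exp (k * s) =
      k⁻¹ * (1 - Real.exp (-k * T) * Real.exp (k * a)) := by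
    rw [intervalIntegral.integral_comp_mul_left _ hk.ne', integral_exp, smul_eq_mul]
    linear_combination k⁻¹ * exp_neg_mul_mul_exp_mul k T
  simpa only [hformula, zero_mul, sub_zero, mul_one] using
    (((tendsto_exp_neg_mul_atTop hk).mul_const (Real.exp (k * a))).const_sub 1).const_mul k⁻¹

theorem tendsto_integral_exp_mul_atTop (hk : 0 < k) (a : ℝ) :
    Tendsto (fun T => ∫ s in a..T, Real.exp (k * s)) atTop atTop := by
  have hexp : Tendsto (fun T => Real.exp (k * T)) atTop atTop :=
    Real.tendsto_exp_atTop.comp (tendsto_id.const_mul_atTop hk)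
  refine (hexp.atTop_mul_pos (inv_pos.2 hk)
    (tendsto_exp_neg_mul_integral_exp_mul hk a)).congr fun T => ?_
  rw [← mul_assoc, mul_comm (Real.exp _), exp_neg_mul_mul_exp_mul, one_mul]

theorem tendsto_exp_neg_smul_integral {E : Type*} [NormedAddCommGroup E] [NormedSpace ℝ E]
    [CompleteSpace E] {a : ℝ} {f : ℝ → E} {L : E} (hk : 0 < k)
    (hf : LocallyIntegrableOn f (Ici a))
    (hL : Tendsto (fun t => Real.exp (-k * t) • f t) atTop (𝓝 L)) :
    Tendsto (fun T => Real.exp (-k * T) • ∫ s in a..T, f s) atTop (𝓝 (k⁻¹ • L)) := by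
  have hrescale (s : ℝ) : Real.exp (k * s) • Real.exp (-k * s) • f s = f s := by
    rw [smul_smul, mul_comm, exp_neg_mul_mul_exp_mul, one_smul]
  have hexp_top := tendsto_integral_exp_mul_atTop hk a
  have hmean : Tendsto (fun T => (∫ s in a..T, Real.exp (k * s))⁻¹ • ∫ s in a..T, f s)
      atTop (𝓝 L) := by
    simpa only [hrescale] using tendsto_inv_integral_smul_integral_smul
      ((by fun_prop : Continuous fun s => Real.exp (k * s)).locallyIntegrable.locallyIntegrableOn _)
      (by simpa only [hrescale] using hf) (fun s _ => (Real.exp_pos _).le) hexp_top hL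
  refine ((tendsto_exp_neg_mul_integral_exp_mul hk a).smul hmean).congr' ?_
  filter_upwards [hexp_top.eventually_gt_atTop 0] with T hpos
  rw [smul_smul, mul_inv_cancel_right₀ hpos.ne']

end Exponential

section Vasicek

variable {θ μ : ℝ} {ζ : ℝ → ℝ} {ζinf : ℝ} {X : ℝ → ℝ}

theorem tendsto_exp_neg_mul_vasicek (hθ : 0 < θ) (hζlim : Tendsto ζ atTop (𝓝 ζinf))
    (hX : ∀ t, 0 ≤ t → X t = μ * (Real.exp (θ * t) - 1) + Real.exp (θ * t) * ζ t) :
    Tendsto (fun t => Real.exp (-θ * t) * X t) atTop (𝓝 (μ + ζinf)) := by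
  have hlim : Tendsto (fun t => μ * (1 - Real.exp (-θ * t)) + ζ t) atTop (𝓝 (μ + ζinf)) := by
    simpa only [sub_zero, mul_one] using
      (((tendsto_exp_neg_mul_atTop hθ).const_sub 1).const_mul μ).add hζlim
  refine hlim.congr' ?_
  filter_upwards [eventually_ge_atTop 0] with t ht
  rw [hX t ht]
  linear_combination -(μ + ζ t) * exp_neg_mul_mul_exp_mul θ t

theorem vasicek_quad_cv_general (hθ : 0 < θ) (hζlim : Tendsto ζ atTop (𝓝 ζinf))
    (hX : ∀ t, 0 ≤ t → X t = μ * (Real.exp (θ * t) - 1) + Real.exp (θ * t) * ζ t)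
    (hX_int : LocallyIntegrableOn (fun t => X t ^ 2) (Ici 0)) :
    Tendsto (fun T : ℝ => Real.exp (-2 * θ * T) * ∫ s in (0 : ℝ)..T, X s ^ 2)
      atTop (𝓝 ((μ + ζinf) ^ 2 / (2 * θ))) := by
  have hsq : Tendsto (fun t => Real.exp (-(2 * θ) * t) • X t ^ 2) atTop
      (𝓝 ((μ + ζinf) ^ 2)) := by
    refine ((tendsto_exp_neg_mul_vasicek hθ hζlim hX).pow 2).congr fun t => ?_
    rw [mul_pow, ← Real.exp_nat_mul, smul_eq_mul]
    ring_nf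
  simpa only [smul_eq_mul, neg_mul, inv_mul_eq_div] using
    tendsto_exp_neg_smul_integral (mul_pos two_pos hθ) hX_int hsq

end Vasicek

theorem vasicek_quad_cv (θ μ : ℝ) (hθ : 0 < θ)
    (ζ : ℝ → ℝ) (ζinf : ℝ)
    (hζcont : ContinuousOn ζ (Set.Ici 0)) (hζ0 : ζ 0 = 0)
    (hζlim : Filter.Tendsto ζ Filter.atTop (nhds ζinf))
    (X : ℝ → ℝ)
    (hX : ∀ t, 0 ≤ t → X t = μ * (Real.exp (θ * t) - 1) + Real.exp (θ * t) * ζ t) :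
    Filter.Tendsto (fun T : ℝ => Real.exp (-2 * θ * T) * ∫ s in (0:ℝ)..T, (X s) ^ 2)
      Filter.atTop (nhds ((μ + ζinf) ^ 2 / (2 * θ))) := by
  have hXcont : ContinuousOn X (Ici 0) := ContinuousOn.congr (by fun_prop) hX
  exact vasicek_quad_cv_general hθ hζlim hX
    ((hXcont.pow 2).locallyIntegrableOn measurableSet_Ici)
end

section
/- Let θ > 0 and μ ∈ ℝ, let ζ : [0,∞) → ℝ be a continuous function with ζ_0 = 0 that converges to a limit ζ_∞ as t → ∞ with μ + ζ_∞ ≠ 0, and define X_t = μ(e^{θt} − 1) + e^{θt} ζ_t for t ≥ 0. Define G_t = X_t − μθt − θ ∫₀^t X_s ds, and assume there exists δ ∈ (0,1) with G_T / T^δ → 0 as T → ∞. Define the least-squares-type estimator μ̃_T = ( ∫₀^T X_s² ds − (1/2) X_T ∫₀^T X_s ds ) / ( (1/2) T X_T − ∫₀^T X_s ds ). Then μ̃_T → μ as T → ∞ (in particular the denominator is nonzero for all T large enough). -/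
open MeasureTheory Filter Set

/-!
Put `R t = ∫₀ᵗ (μ + X)`. The definition of `G` reads `X = θ R + G`, and `R' = μ + X`, so that
`∫₀ᵀ R R' = R T ^ 2 / 2` cancels every noise-free term of the estimation error:
`numerator - μ * denominator = ∫₀ᵀ (μ + X) G - G T * R T / 2`.
If `X` has exact order `exp (θ T)` and `G T = o(T)`, then `R T = O(exp (θ T))`, and the right-hand
side is `o(T exp (θ T))`, whereas the denominator has exact order `T exp (θ T)`.
-/

open Asymptotics
open scoped Interval

theorem uIcc_subset_Ici {α : Type*} [Lattice α] {a b : α} (h : a ≤ b) : [[a, b]] ⊆ Ici a :=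
  (uIcc_of_le h).trans_subset Icc_subset_Ici_self

section Calculus

variable {E : Type*} [NormedAddCommGroup E] [NormedSpace ℝ E]

theorem isLittleO_atTop_of_hasDerivAt {u u' : ℝ → E} {F F' : ℝ → ℝ}
    (hu : ∀ᶠ x in atTop, HasDerivAt u (u' x) x) (hF : ∀ᶠ x in atTop, HasDerivAt F (F' x) x)
    (hF' : ∀ᶠ x in atTop, 0 ≤ F' x) (hFtop : Tendsto F atTop atTop) (h : u' =o[atTop] F') :
    u =o[atTop] F := by
  refine isLittleO_iff.2 fun ε hε => ?_
  obtain ⟨A, hA⟩ := eventually_atTop.1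
    (hu.and (hF.and (hF'.and (isLittleO_iff.1 h (half_pos hε)))))
  have hB {x : ℝ} (hx : A ≤ x) :
      HasDerivAt (fun x => ε / 2 * (F x - F A) + ‖u A‖) (ε / 2 * F' x) x :=
    (((hA x hx).2.1.sub_const (F A)).const_mul (ε / 2)).add_const ‖u A‖
  have hle {x : ℝ} (hx : A ≤ x) : ‖u' x‖ ≤ ε / 2 * F' x := by
    obtain ⟨-, -, hpos, hle⟩ := hA x hx
    rwa [Real.norm_of_nonneg hpos] at hle
  have hbound {T : ℝ} (hT : A ≤ T) : ‖u T‖ ≤ ε / 2 * (F T - F A) + ‖u A‖ :=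
    image_norm_le_of_norm_deriv_right_le_deriv_boundary'
      (fun x hx => (hA x hx.1).1.continuousAt.continuousWithinAt)
      (fun x hx => (hA x hx.1).1.hasDerivWithinAt) (by simp)
      (fun x hx => (hB hx.1).continuousAt.continuousWithinAt)
      (fun x hx => (hB hx.1).hasDerivWithinAt) (fun x hx => hle hx.1) ⟨hT, le_rfl⟩
  filter_upwards [eventually_ge_atTop A, hFtop.eventually_ge_atTop 0,
    (hFtop.const_mul_atTop (half_pos hε)).eventually_ge_atTop (‖u A‖ - ε / 2 * F A)]
    with T hAT hFT hlarge
  rw [Real.norm_of_nonneg hFT]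
  linarith [hbound hAT]

theorem continuousOn_Ici_integral {f : ℝ → E} {a : ℝ} (hf : ContinuousOn f (Ici a)) :
    ContinuousOn (fun t => ∫ s in a..t, f s) (Ici a) := by
  intro x hx
  have hax : a ≤ x + 1 := (mem_Ici.1 hx).trans (lt_add_one x).le
  have hint : IntervalIntegrable f volume a (x + 1) :=
    (hf.mono (uIcc_subset_Ici hax)).intervalIntegrable
  have hcont := intervalIntegral.continuousOn_primitive_interval' hint left_mem_uIcc
  rw [uIcc_of_le hax] at hcont
  exact (hcont x ⟨hx, (lt_add_one x).le⟩).mono_of_mem_nhdsWithin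
    (inter_mem_nhdsWithin _ (Iic_mem_nhds (lt_add_one x)))

theorem hasDerivAt_integral_of_continuousOn_Ici [CompleteSpace E] {f : ℝ → E} {a x : ℝ}
    (hf : ContinuousOn f (Ici a)) (hx : a < x) :
    HasDerivAt (fun t => ∫ s in a..t, f s) (f x) x :=
  intervalIntegral.integral_hasDerivAt_right
    (hf.mono (uIcc_subset_Ici hx.le)).intervalIntegrable
    ((hf.mono Ioi_subset_Ici_self).stronglyMeasurableAtFilter isOpen_Ioi x hx)
    (hf.continuousAt (Ici_mem_nhds hx))

theorem integral_isLittleO_id_mul_exp [CompleteSpace E] {f : ℝ → E} {a θ : ℝ} (hθ : 0 < θ)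
    (hf : ContinuousOn f (Ici a)) (h : f =o[atTop] fun t => t * Real.exp (θ * t)) :
    (fun T => ∫ s in a..T, f s) =o[atTop] fun T => T * Real.exp (θ * T) := by
  have hderiv (t : ℝ) : HasDerivAt (fun t => t * Real.exp (θ * t))
      (Real.exp (θ * t) + θ * (t * Real.exp (θ * t))) t := by
    convert! (hasDerivAt_id t).mul ((hasDerivAt_id t).const_mul θ).exp using 1
    simp only [id]
    ring
  have hle : (fun t => t * Real.exp (θ * t))
      =O[atTop] fun t => Real.exp (θ * t) + θ * (t * Real.exp (θ * t)) := by
    refine IsBigO.of_bound θ⁻¹ ?_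
    filter_upwards [eventually_ge_atTop 0] with t ht
    rw [Real.norm_of_nonneg (by positivity), Real.norm_of_nonneg (by positivity),
      le_inv_mul_iff₀ hθ]
    exact le_add_of_nonneg_left (Real.exp_nonneg _)
  refine isLittleO_atTop_of_hasDerivAt ?_ (.of_forall hderiv) ?_ ?_ (h.trans_isBigO hle)
  · filter_upwards [eventually_gt_atTop a] with t ht
    exact hasDerivAt_integral_of_continuousOn_Ici hf ht
  · filter_upwards [eventually_ge_atTop 0] with t ht
    positivity
  · exact tendsto_id.atTop_mul_atTop₀
      (Real.tendsto_exp_atTop.comp (tendsto_id.const_mul_atTop hθ))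

theorem integral_primitive_mul_self {f : ℝ → ℝ} {a b : ℝ} (hf : IntervalIntegrable f volume a b) :
    ∫ x in a..b, (∫ t in a..x, f t) * f x = (∫ x in a..b, f x) ^ 2 / 2 := by
  have hF := hf.absolutelyContinuousOnInterval_intervalIntegral left_mem_uIcc
  have hderiv : ∫ x in a..b, (∫ t in a..x, f t) * deriv (fun y => ∫ t in a..y, f t) x =
      ∫ x in a..b, (∫ t in a..x, f t) * f x := by
    refine intervalIntegral.integral_congr_ae ?_
    filter_upwards [hf.ae_hasDerivAt_integral] with x hx hxab
    rw [(hx (uIoc_subset_uIcc hxab) a left_mem_uIcc).deriv]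
  have hparts := hF.integral_mul_deriv_eq_deriv_mul hF
  simp only [mul_comm (deriv _ _), hderiv, intervalIntegral.integral_same] at hparts
  linarith

theorem integral_const_add {f : ℝ → ℝ} {a b c : ℝ} (hf : IntervalIntegrable f volume a b) :
    ∫ x in a..b, (c + f x) = c * (b - a) + ∫ x in a..b, f x := by
  rw [intervalIntegral.integral_add intervalIntegrable_const hf, intervalIntegral.integral_const,
    smul_eq_mul, mul_comm]

end Calculus

theorem isLittleO_id_of_tendsto_div_rpow {f : ℝ → ℝ} {δ : ℝ} (hδ : δ ≤ 1)
    (hf : Tendsto (fun t => f t / t ^ δ) atTop (nhds 0)) : f =o[atTop] fun t => t := by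
  have hfδ : f =o[atTop] fun t => t ^ δ := by
    refine (isLittleO_iff_tendsto' ?_).2 hf
    filter_upwards [eventually_gt_atTop 0] with t ht h
    exact absurd h (Real.rpow_pos_of_pos ht δ).ne'
  have hδ1 : (fun t : ℝ => t ^ δ) =O[atTop] fun t => t := by
    refine IsBigO.of_bound' ?_
    filter_upwards [eventually_ge_atTop 1] with t ht
    have ht0 : 0 ≤ t := zero_le_one.trans ht
    rw [Real.norm_of_nonneg (Real.rpow_nonneg ht0 δ), Real.norm_of_nonneg ht0]
    exact Real.rpow_le_self_of_one_le ht hδ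
  exact hfδ.trans_isBigO hδ1

theorem isBigO_id_exp_mul {θ : ℝ} (hθ : 0 < θ) :
    (fun t : ℝ => t) =O[atTop] fun t => Real.exp (θ * t) := by
  simpa using (isLittleO_pow_exp_pos_mul_atTop 1 hθ).isBigO

section Vasicek

variable {θ μ : ℝ} {X G : ℝ → ℝ}

theorem vasicek_solution_isTheta_exp {ζ : ℝ → ℝ} {ζinf : ℝ} (hθ : 0 < θ)
    (hζ : Tendsto ζ atTop (nhds ζinf)) (hne : μ + ζinf ≠ 0)
    (hX : ∀ t, 0 ≤ t → X t = μ * (Real.exp (θ * t) - 1) + Real.exp (θ * t) * ζ t) :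
    X =Θ[atTop] fun t => Real.exp (θ * t) := by
  have hexp : Tendsto (fun t => Real.exp (-(θ * t))) atTop (nhds 0) :=
    Real.tendsto_exp_neg_atTop_nhds_zero.comp (tendsto_id.const_mul_atTop hθ)
  have hlim : Tendsto (fun t => μ * (1 - Real.exp (-(θ * t))) + ζ t) atTop (nhds (μ + ζinf)) := by
    simpa using ((hexp.const_sub 1).const_mul μ).add hζ
  refine (isTheta_of_div_tendsto_nhds_ne_zero (hlim.congr' ?_) hne).symm
  filter_upwards [eventually_ge_atTop 0] with t ht
  rw [hX t ht, Real.exp_neg]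
  field_simp

theorem vasicek_numerator_sub_mul_denominator {T : ℝ} (hX : ContinuousOn X [[0, T]])
    (hG : ∀ t ∈ [[0, T]], G t = X t - μ * θ * t - θ * ∫ s in (0 : ℝ)..t, X s) :
    ((∫ s in (0 : ℝ)..T, X s ^ 2) - 1 / 2 * X T * ∫ s in (0 : ℝ)..T, X s) -
        μ * (1 / 2 * T * X T - ∫ s in (0 : ℝ)..T, X s) =
      (∫ s in (0 : ℝ)..T, (μ + X s) * G s) - 1 / 2 * G T * ∫ s in (0 : ℝ)..T, (μ + X s) := by
  set R : ℝ → ℝ := fun t => ∫ s in (0 : ℝ)..t, (μ + X s)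
  have hY : IntervalIntegrable (fun s => μ + X s) volume 0 T :=
    (continuousOn_const.add hX).intervalIntegrable
  have hR (t) (ht : t ∈ [[0, T]]) : R t = μ * t + ∫ s in (0 : ℝ)..t, X s := by
    simpa only [sub_zero] using
      integral_const_add (hX.mono (uIcc_subset_uIcc_left ht)).intervalIntegrable
  have hGR (t) (ht : t ∈ [[0, T]]) : G t = X t - θ * R t := by
    rw [hG t ht, hR t ht]
    ring
  have hX₁ : IntervalIntegrable (fun s => μ * X s) volume 0 T := hX.intervalIntegrable.const_mul μ
  have hX₂ : IntervalIntegrable (fun s => X s ^ 2) volume 0 T := (hX.pow 2).intervalIntegrable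
  have hRY : IntervalIntegrable (fun s => R s * (μ + X s)) volume 0 T :=
    hY.continuousOn_mul (intervalIntegral.continuousOn_primitive_interval' hY left_mem_uIcc)
  have hcongr : ∫ s in (0 : ℝ)..T, (μ + X s) * G s =
      ∫ s in (0 : ℝ)..T, (X s ^ 2 + μ * X s - θ * (R s * (μ + X s))) :=
    intervalIntegral.integral_congr fun s hs => by simp only [hGR s hs]; ring
  have hnoise : ∫ s in (0 : ℝ)..T, (μ + X s) * G s =
      (∫ s in (0 : ℝ)..T, X s ^ 2) + μ * (∫ s in (0 : ℝ)..T, X s) - θ * (R T ^ 2 / 2) := by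
    rw [hcongr, intervalIntegral.integral_sub (hX₂.add hX₁) (hRY.const_mul θ),
      intervalIntegral.integral_add hX₂ hX₁, intervalIntegral.integral_const_mul,
      intervalIntegral.integral_const_mul, integral_primitive_mul_self hY]
  rw [hnoise, hGR T right_mem_uIcc, show ∫ s in (0 : ℝ)..T, (μ + X s) = R T from rfl]
  linear_combination X T / 2 * hR T right_mem_uIcc

theorem vasicek_integral_isBigO_exp (hθ : 0 < θ) (hXgrowth : X =O[atTop] fun t => Real.exp (θ * t))
    (hG : ∀ t, 0 ≤ t → G t = X t - μ * θ * t - θ * ∫ s in (0 : ℝ)..t, X s)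
    (hGgrowth : G =o[atTop] fun t => t) :
    (fun T => ∫ s in (0 : ℝ)..T, X s) =O[atTop] fun T => Real.exp (θ * T) := by
  have hid := isBigO_id_exp_mul hθ
  have hbig := ((hXgrowth.sub (hid.const_mul_left (μ * θ))).sub
    (hGgrowth.isBigO.trans hid)).const_mul_left θ⁻¹
  refine hbig.congr' ?_ .rfl
  filter_upwards [eventually_ge_atTop 0] with T hT
  rw [hG T hT]
  field_simp
  ring

theorem vasicek_denominator_isTheta (hX : X =Θ[atTop] fun t => Real.exp (θ * t))
    (hint : (fun T => ∫ s in (0 : ℝ)..T, X s) =O[atTop] fun T => Real.exp (θ * T)) :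
    (fun T => 1 / 2 * T * X T - ∫ s in (0 : ℝ)..T, X s)
      =Θ[atTop] fun T => T * Real.exp (θ * T) := by
  have hmain : (fun T => 1 / 2 * T * X T) =Θ[atTop] fun T => T * Real.exp (θ * T) :=
    ((isTheta_refl _ _).const_mul_left (by norm_num)).mul hX
  have hsmall : (fun T => ∫ s in (0 : ℝ)..T, X s) =o[atTop] fun T => T * Real.exp (θ * T) := by
    simpa using (isLittleO_const_id_atTop (1 : ℝ)).mul_isBigO hint
  simp_rw [sub_eq_add_neg]
  exact hmain.add_isLittleO hsmall.neg_left

theorem vasicek_error_isLittleO (hθ : 0 < θ) (hX : ContinuousOn X (Ici 0))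
    (hGcont : ContinuousOn G (Ici 0))
    (hXgrowth : X =O[atTop] fun t => Real.exp (θ * t)) (hGgrowth : G =o[atTop] fun t => t)
    (hint : (fun T => ∫ s in (0 : ℝ)..T, X s) =O[atTop] fun T => Real.exp (θ * T)) :
    (fun T => (∫ s in (0 : ℝ)..T, (μ + X s) * G s) - 1 / 2 * G T * ∫ s in (0 : ℝ)..T, (μ + X s))
      =o[atTop] fun T => T * Real.exp (θ * T) := by
  have hconst : (fun _ : ℝ => μ) =O[atTop] fun t => Real.exp (θ * t) :=
    (isLittleO_const_id_atTop μ).isBigO.trans (isBigO_id_exp_mul hθ)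
  have hprod : (fun t => (μ + X t) * G t) =o[atTop] fun t => t * Real.exp (θ * t) := by
    simpa only [mul_comm] using hGgrowth.mul_isBigO (hconst.add hXgrowth)
  have hR : (fun T => ∫ s in (0 : ℝ)..T, (μ + X s)) =O[atTop] fun T => Real.exp (θ * T) := by
    refine (((isBigO_id_exp_mul hθ).const_mul_left μ).add hint).congr' ?_ .rfl
    filter_upwards [eventually_ge_atTop 0] with T hT
    rw [integral_const_add (hX.mono (uIcc_subset_Ici hT)).intervalIntegrable, sub_zero]
  exact (integral_isLittleO_id_mul_exp hθ ((continuousOn_const.add hX).mul hGcont) hprod).sub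
    ((hGgrowth.const_mul_left (1 / 2)).mul_isBigO hR)

theorem vasicek_mu_consistency_general (hθ : 0 < θ) (hX : ContinuousOn X (Ici 0))
    (hXgrowth : X =Θ[atTop] fun t => Real.exp (θ * t))
    (hG : ∀ t, 0 ≤ t → G t = X t - μ * θ * t - θ * ∫ s in (0 : ℝ)..t, X s)
    (hGgrowth : G =o[atTop] fun t => t) :
    (∀ᶠ T : ℝ in atTop, 1 / 2 * T * X T - (∫ s in (0 : ℝ)..T, X s) ≠ 0) ∧
    Tendsto
      (fun T : ℝ =>
        ((∫ s in (0 : ℝ)..T, X s ^ 2) - 1 / 2 * X T * ∫ s in (0 : ℝ)..T, X s) /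
          (1 / 2 * T * X T - ∫ s in (0 : ℝ)..T, X s))
      atTop (nhds μ) := by
  have hGcont : ContinuousOn G (Ici 0) := ContinuousOn.congr
    ((hX.sub (by fun_prop)).sub ((continuousOn_Ici_integral hX).const_mul θ)) hG
  have hint := vasicek_integral_isBigO_exp hθ hXgrowth.isBigO hG hGgrowth
  have hden := vasicek_denominator_isTheta hXgrowth hint
  have hden_ne : ∀ᶠ T in atTop, 1 / 2 * T * X T - (∫ s in (0 : ℝ)..T, X s) ≠ 0 := by
    filter_upwards [hden.eq_zero_iff, eventually_gt_atTop 0] with T hiff hT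
    exact hiff.not.2 (by positivity)
  have herr := vasicek_error_isLittleO (μ := μ) hθ hX hGcont hXgrowth.isBigO hGgrowth hint
  have hlim := (herr.trans_isTheta hden.symm).tendsto_div_nhds_zero.const_add μ
  rw [add_zero] at hlim
  refine ⟨hden_ne, hlim.congr' ?_⟩
  filter_upwards [hden_ne, eventually_ge_atTop 0] with T hne hT
  have hsub : [[0, T]] ⊆ Ici 0 := uIcc_subset_Ici hT
  rw [← vasicek_numerator_sub_mul_denominator (hX.mono hsub) fun t ht => hG t (hsub ht),
    sub_div, mul_div_cancel_right₀ _ hne, add_sub_cancel]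

end Vasicek

theorem vasicek_mu_consistency (θ μ : ℝ) (hθ : 0 < θ)
    (ζ : ℝ → ℝ) (ζinf : ℝ)
    (hζcont : ContinuousOn ζ (Set.Ici 0)) (hζ0 : ζ 0 = 0)
    (hζlim : Filter.Tendsto ζ Filter.atTop (nhds ζinf))
    (hne : μ + ζinf ≠ 0)
    (X : ℝ → ℝ)
    (hX : ∀ t, 0 ≤ t → X t = μ * (Real.exp (θ * t) - 1) + Real.exp (θ * t) * ζ t)
    (G : ℝ → ℝ)
    (hG : ∀ t, G t = X t - μ * θ * t - θ * ∫ s in (0:ℝ)..t, X s)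
    (hGrowth : ∃ δ ∈ Set.Ioo (0:ℝ) 1,
      Filter.Tendsto (fun T : ℝ => G T / T ^ δ) Filter.atTop (nhds 0)) :
    (∀ᶠ T : ℝ in Filter.atTop,
        (1 / 2) * T * X T - (∫ s in (0:ℝ)..T, X s) ≠ 0) ∧
    Filter.Tendsto
      (fun T : ℝ =>
        ((∫ s in (0:ℝ)..T, (X s) ^ 2) - (1 / 2) * X T * ∫ s in (0:ℝ)..T, X s) /
          ((1 / 2) * T * X T - ∫ s in (0:ℝ)..T, X s))
      Filter.atTop (nhds μ) := by
  obtain ⟨δ, hδ, hGδ⟩ := hGrowth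
  exact vasicek_mu_consistency_general hθ (ContinuousOn.congr (by fun_prop) hX)
    (vasicek_solution_isTheta_exp hθ hζlim hne hX) (fun t _ => hG t)
    (isLittleO_id_of_tendsto_div_rpow hδ.2.le hGδ)
end

section
/- Let θ > 0 and μ ∈ ℝ, let ζ : [0,∞) → ℝ be a continuous function with ζ_0 = 0 that converges to a limit ζ_∞ as t → ∞ with μ + ζ_∞ ≠ 0, and define X_t = μ(e^{θt} − 1) + e^{θt} ζ_t for t ≥ 0. Define G_t = X_t − μθt − θ ∫₀^t X_s ds, and assume there exists δ ∈ (0,1) with G_T / T^δ → 0 as T → ∞. Define the least-squares-type estimator α̃_T = ( X_T ∫₀^T X_s² ds − (1/2) X_T² ∫₀^T X_s ds ) / ( T ∫₀^T X_s² ds − (∫₀^T X_s ds)² ). Then α̃_T → α := μθ as T → ∞. -/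
open MeasureTheory Filter Set

/-!
Put `I = ∫ X`, `Q = ∫ X²` and `H = X - θ I`, which is `α t + G t` in the Vasicek model. Then `X`
grows like `c * exp (θ t)` with `c = μ + ζ_∞ ≠ 0`, and `H` is asymptotically linear: `H t / t → α`.
Substituting `X = H + θ I` in one factor of the numerator gives

  `X Q - X² I / 2 = H Q + I (θ Q - X² / 2)`.

After division by `T * exp (2 θ T)`, the denominator `T Q - I²` tends to `c² / (2 θ)` and `H Q` to
`α c² / (2 θ)`, by L'Hôpital's rule. The remaining term vanishes because `∫ X I = I² / 2`, whence

  `θ Q - X² / 2 = θ (∫ X H - H I) - H² / 2`,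

where `∫ X H` and `H I` are both equal to `(c α / θ) T * exp (θ T)` up to `o(T * exp (θ T))`.
-/

open Asymptotics
open scoped Topology

theorem isLittleO_of_hasDerivAt_isLittleO {E : Type*} [NormedAddCommGroup E] [NormedSpace ℝ E]
    {F F' : ℝ → E} {Φ φ : ℝ → ℝ} (hF : ∀ᶠ t in atTop, HasDerivAt F (F' t) t)
    (hΦ : ∀ᶠ t in atTop, HasDerivAt Φ (φ t) t) (hφ : ∀ᶠ t in atTop, 0 ≤ φ t)
    (hΦtop : Tendsto Φ atTop atTop) (h : F' =o[atTop] φ) : F =o[atTop] Φ := by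
  refine isLittleO_iff.2 fun ε hε => ?_
  obtain ⟨A, hA⟩ := eventually_atTop.1
    (hF.and (hΦ.and (hφ.and (isLittleO_iff.1 h (half_pos hε)))))
  choose hF' hΦ' hφ' hF'φ using hA
  have hB : ∀ t, A ≤ t →
      HasDerivAt (fun u => ‖F A‖ + ε / 2 * (Φ u - Φ A)) (ε / 2 * φ t) t := fun t ht =>
    (((hΦ' t ht).sub_const _).const_mul _).const_add _
  have hF'B : ∀ t, A ≤ t → ‖F' t‖ ≤ ε / 2 * φ t := fun t ht =>
    (hF'φ t ht).trans_eq (by rw [Real.norm_of_nonneg (hφ' t ht)])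
  have norm_le : ∀ T, A ≤ T → ‖F T‖ ≤ ‖F A‖ + ε / 2 * (Φ T - Φ A) := fun T hT =>
    image_norm_le_of_norm_deriv_right_le_deriv_boundary'
      (fun t ht => (hF' t ht.1).continuousAt.continuousWithinAt)
      (fun t ht => (hF' t ht.1).hasDerivWithinAt) (by simp)
      (fun t ht => (hB t ht.1).continuousAt.continuousWithinAt)
      (fun t ht => (hB t ht.1).hasDerivWithinAt) (fun t ht => hF'B t ht.1) ⟨hT, le_rfl⟩
  have const_le : ∀ᶠ T in atTop, ‖F A‖ - ε / 2 * Φ A ≤ ε / 2 * Φ T :=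
    (hΦtop.const_mul_atTop (half_pos hε)).eventually_ge_atTop _
  filter_upwards [eventually_ge_atTop A, const_le] with T hT hconst
  calc ‖F T‖ ≤ ‖F A‖ + ε / 2 * (Φ T - Φ A) := norm_le T hT
    _ ≤ ε * Φ T := by linarith
    _ ≤ ε * ‖Φ T‖ := by gcongr; exact Real.le_norm_self _

theorem tendsto_div_of_tendsto_hasDerivAt_div {F F' Φ φ : ℝ → ℝ} {L : ℝ}
    (hF : ∀ᶠ t in atTop, HasDerivAt F (F' t) t) (hΦ : ∀ᶠ t in atTop, HasDerivAt Φ (φ t) t)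
    (hφ : ∀ᶠ t in atTop, 0 < φ t) (hΦtop : Tendsto Φ atTop atTop)
    (h : Tendsto (fun t => F' t / φ t) atTop (𝓝 L)) :
    Tendsto (fun t => F t / Φ t) atTop (𝓝 L) := by
  have hderiv : (fun t => F' t - L * φ t) =o[atTop] φ := by
    refine isLittleO_of_tendsto' (hφ.mono fun t ht h0 => absurd h0 ht.ne') ?_
    refine (tendsto_sub_nhds_zero_iff.2 h).congr' (hφ.mono fun t ht => ?_)
    field_simp
  have hsub : (fun t => F t - L * Φ t) =o[atTop] Φ :=
    isLittleO_of_hasDerivAt_isLittleO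
      (hF.mp (hΦ.mono fun t hΦt hFt => hFt.sub (hΦt.const_mul L))) hΦ
      (hφ.mono fun _ => le_of_lt) hΦtop hderiv
  refine tendsto_sub_nhds_zero_iff.1 (hsub.tendsto_div_nhds_zero.congr' ?_)
  filter_upwards [hΦtop.eventually_ne_atTop 0] with t ht
  field_simp

theorem tendsto_div_id_of_tendsto_div_rpow {g : ℝ → ℝ} {δ : ℝ} (hδ : δ ≤ 1)
    (hg : Tendsto (fun T => g T / T ^ δ) atTop (𝓝 0)) :
    Tendsto (fun T => g T / T) atTop (𝓝 0) := by
  have hrpow : (fun T : ℝ => T ^ δ) =O[atTop] fun T => T := by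
    refine .of_norm_eventuallyLE ?_
    filter_upwards [eventually_ge_atTop 1] with T hT
    rw [Real.norm_of_nonneg (by positivity)]
    exact Real.rpow_le_self_of_one_le hT hδ
  have hlittle : g =o[atTop] fun T : ℝ => T ^ δ := by
    refine isLittleO_of_tendsto' ?_ hg
    filter_upwards [eventually_gt_atTop 0] with T hT h0
    exact absurd h0 (Real.rpow_pos_of_pos hT δ).ne'
  exact (hlittle.trans_isBigO hrpow).tendsto_div_nhds_zero

section Primitive

variable {f : ℝ → ℝ} {a b : ℝ}

theorem hasDerivAt_integral_of_continuousOn_Icc (hf : ContinuousOn f (Icc a b)) {t : ℝ}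
    (ht : t ∈ Ioo a b) : HasDerivAt (fun u => ∫ s in a..u, f s) (f t) t :=
  intervalIntegral.integral_hasDerivAt_right
    ((hf.mono (Icc_subset_Icc_right ht.2.le)).intervalIntegrable_of_Icc ht.1.le)
    ((hf.mono Ioo_subset_Icc_self).stronglyMeasurableAtFilter isOpen_Ioo t ht)
    (hf.continuousAt (Icc_mem_nhds ht.1 ht.2))

theorem continuousOn_integral_of_continuousOn_Icc (hf : ContinuousOn f (Icc a b)) :
    ContinuousOn (fun t => ∫ s in a..t, f s) (Icc a b) := by
  obtain hab | hba := le_or_gt a b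
  · rw [← uIcc_of_le hab] at hf ⊢
    exact intervalIntegral.continuousOn_primitive_interval hf.integrableOn_uIcc
  · simp only [Icc_eq_empty_of_lt hba, continuousOn_empty]

theorem continuousOn_integral_of_continuousOn_Ici (hf : ContinuousOn f (Ici a)) :
    ContinuousOn (fun t => ∫ s in a..t, f s) (Ici a) := by
  intro t ht
  have hmem : Icc a (t + 1) ∈ 𝓝[Ici a] t := by
    rw [← Ici_inter_Iic]
    exact inter_mem_nhdsWithin _ (Iic_mem_nhds (lt_add_one t))
  exact (continuousOn_integral_of_continuousOn_Icc (hf.mono Icc_subset_Ici_self) t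
    ⟨ht, (lt_add_one t).le⟩).mono_of_mem_nhdsWithin hmem

theorem integral_mul_primitive (hab : a ≤ b) (hf : ContinuousOn f (Icc a b)) :
    ∫ t in a..b, f t * ∫ s in a..t, f s = (∫ t in a..b, f t) ^ 2 / 2 := by
  have hI := continuousOn_integral_of_continuousOn_Icc hf
  have hderiv : ∀ t ∈ Ioo a b,
      HasDerivAt (fun t => (∫ s in a..t, f s) ^ 2 / 2) (f t * ∫ s in a..t, f s) t :=
    fun t ht => (((hasDerivAt_integral_of_continuousOn_Icc hf ht).pow 2).div_const 2).congr_deriv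
      (by push_cast; ring)
  rw [intervalIntegral.integral_eq_sub_of_hasDerivAt_of_le hab ((hI.pow 2).div_const 2) hderiv
    ((hf.mul hI).intervalIntegrable_of_Icc hab)]
  simp

theorem tendsto_integral_div_rpow_mul_exp {k p L : ℝ} (hk : 0 < k) (hf : ContinuousOn f (Ici a))
    (h : Tendsto (fun t => f t / (t ^ p * Real.exp (k * t))) atTop (𝓝 L)) :
    Tendsto (fun T => (∫ s in a..T, f s) / (T ^ p * Real.exp (k * T))) atTop (𝓝 (L / k)) := by
  have hk_lim : Tendsto (fun t => p / t + k) atTop (𝓝 k) := by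
    simpa using (tendsto_id.const_div_atTop p).add_const k
  refine tendsto_div_of_tendsto_hasDerivAt_div (F' := f)
    (φ := fun t => t ^ p * Real.exp (k * t) * (p / t + k)) ?_ ?_ ?_ ?_ ?_
  · filter_upwards [eventually_gt_atTop a] with t ht
    exact hasDerivAt_integral_of_continuousOn_Icc (hf.mono Icc_subset_Ici_self)
      ⟨ht, lt_add_one t⟩
  · filter_upwards [eventually_gt_atTop 0] with t ht
    refine ((Real.hasDerivAt_rpow_const (Or.inl ht.ne')).mul
      ((hasDerivAt_id t).const_mul k).exp).congr_deriv ?_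
    simp only [id, Real.rpow_sub_one ht.ne']
    ring
  · filter_upwards [eventually_gt_atTop 0, hk_lim.eventually_const_lt hk] with t ht hkt
    positivity
  · refine (tendsto_exp_mul_div_rpow_atTop (-p) k hk).congr' ?_
    filter_upwards [eventually_gt_atTop 0] with t ht
    rw [Real.rpow_neg ht.le, div_inv_eq_mul, mul_comm]
  · exact (h.div hk_lim hk.ne').congr fun t => by rw [Pi.div_apply, div_div]

theorem tendsto_integral_div_exp {k L : ℝ} (hk : 0 < k) (hf : ContinuousOn f (Ici a))
    (h : Tendsto (fun t => f t / Real.exp (k * t)) atTop (𝓝 L)) :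
    Tendsto (fun T => (∫ s in a..T, f s) / Real.exp (k * T)) atTop (𝓝 (L / k)) := by
  simpa using tendsto_integral_div_rpow_mul_exp (p := 0) hk hf (by simpa using h)

end Primitive

/-- The forcing term `H` of the linear equation `dX = θ X dt + dH`, `H 0 = X 0`, solved by `X`.
In the Vasicek model it is `H t = α t + G t`, so that `α` is its asymptotic slope. -/
noncomputable def forcing (θ : ℝ) (X : ℝ → ℝ) (T : ℝ) : ℝ :=
  X T - θ * ∫ s in (0 : ℝ)..T, X s

section Estimator

variable {θ α c : ℝ} {X : ℝ → ℝ}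

theorem continuousOn_forcing (hX : ContinuousOn X (Ici 0)) :
    ContinuousOn (forcing θ X) (Ici 0) :=
  hX.sub ((continuousOn_integral_of_continuousOn_Ici hX).const_mul θ)

theorem tendsto_integral_sq_div_exp_sq (hθ : 0 < θ) (hX : ContinuousOn X (Ici 0))
    (hlim : Tendsto (fun t => X t / Real.exp (θ * t)) atTop (𝓝 c)) :
    Tendsto (fun T => (∫ s in (0 : ℝ)..T, X s ^ 2) / Real.exp (θ * T) ^ 2) atTop
      (𝓝 (c ^ 2 / (2 * θ))) := by
  have exp_sq : ∀ t, Real.exp (θ * t) ^ 2 = Real.exp (2 * θ * t) := fun t => by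
    rw [← Real.exp_nat_mul, Nat.cast_ofNat, mul_assoc]
  simp only [exp_sq]
  refine tendsto_integral_div_exp (by positivity) (hX.pow 2) ?_
  simpa only [div_pow, exp_sq] using hlim.pow 2

theorem mul_integral_sq_sub_sq_div_two {T : ℝ} (hT : 0 ≤ T) (hX : ContinuousOn X (Icc 0 T)) :
    θ * (∫ s in (0 : ℝ)..T, X s ^ 2) - X T ^ 2 / 2 =
      θ * ((∫ s in (0 : ℝ)..T, X s * forcing θ X s) - forcing θ X T * ∫ s in (0 : ℝ)..T, X s)
        - forcing θ X T ^ 2 / 2 := by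
  have hXI : ContinuousOn (fun t => θ * (X t * ∫ s in (0 : ℝ)..t, X s)) (Icc 0 T) :=
    (hX.mul (continuousOn_integral_of_continuousOn_Icc hX)).const_mul θ
  have hX2 : ContinuousOn (fun t => X t ^ 2) (Icc 0 T) := hX.pow 2
  have integral_mul_forcing : ∫ s in (0 : ℝ)..T, X s * forcing θ X s =
      (∫ s in (0 : ℝ)..T, X s ^ 2) - θ * ((∫ s in (0 : ℝ)..T, X s) ^ 2 / 2) := by
    rw [← integral_mul_primitive hT hX, ← intervalIntegral.integral_const_mul,
      ← intervalIntegral.integral_sub (hX2.intervalIntegrable_of_Icc hT)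
        (hXI.intervalIntegrable_of_Icc hT)]
    congr 1 with s
    rw [forcing]
    ring
  rw [integral_mul_forcing, forcing]
  ring

theorem tendsto_mul_integral_sq_sub_sq_div_two_div (hθ : 0 < θ) (hX : ContinuousOn X (Ici 0))
    (hlim : Tendsto (fun t => X t / Real.exp (θ * t)) atTop (𝓝 c))
    (hH : Tendsto (fun T => forcing θ X T / T) atTop (𝓝 α)) :
    Tendsto (fun T => (θ * (∫ s in (0 : ℝ)..T, X s ^ 2) - X T ^ 2 / 2) /
      (T * Real.exp (θ * T))) atTop (𝓝 0) := by
  have integral_mul_forcing_lim : Tendsto (fun T =>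
      (∫ s in (0 : ℝ)..T, X s * forcing θ X s) / (T * Real.exp (θ * T))) atTop
      (𝓝 (α * c / θ)) := by
    have hprod : Tendsto (fun t => X t * forcing θ X t / (t * Real.exp (θ * t))) atTop
        (𝓝 (α * c)) := (hH.mul hlim).congr fun t => by rw [div_mul_div_comm, mul_comm (X t)]
    have hcont : ContinuousOn (fun t => X t * forcing θ X t) (Ici 0) :=
      hX.mul (continuousOn_forcing hX)
    simpa only [Real.rpow_one] using tendsto_integral_div_rpow_mul_exp (p := 1) hθ hcont
      (by simpa only [Real.rpow_one] using hprod)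
  have forcing_mul_integral_lim : Tendsto (fun T =>
      forcing θ X T / T * ((∫ s in (0 : ℝ)..T, X s) / Real.exp (θ * T))) atTop
      (𝓝 (α * (c / θ))) := hH.mul (tendsto_integral_div_exp hθ hX hlim)
  have id_div_exp_lim : Tendsto (fun T => T / Real.exp (θ * T)) atTop (𝓝 0) := by
    simpa only [Real.rpow_one] using
      (isLittleO_rpow_exp_pos_mul_atTop 1 hθ).tendsto_div_nhds_zero
  have hcombined := ((integral_mul_forcing_lim.sub forcing_mul_integral_lim).const_mul θ).sub
    (((hH.pow 2).mul id_div_exp_lim).div_const 2)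
  rw [mul_div_assoc, sub_self, mul_zero, mul_zero, zero_div, sub_zero] at hcombined
  refine hcombined.congr' ?_
  filter_upwards [eventually_gt_atTop 0] with T hT
  rw [mul_integral_sq_sub_sq_div_two hT.le (hX.mono Icc_subset_Ici_self)]
  field_simp

theorem tendsto_estimator_num_div (hθ : 0 < θ) (hX : ContinuousOn X (Ici 0))
    (hlim : Tendsto (fun t => X t / Real.exp (θ * t)) atTop (𝓝 c))
    (hH : Tendsto (fun T => forcing θ X T / T) atTop (𝓝 α)) :
    Tendsto (fun T =>
      (X T * (∫ s in (0 : ℝ)..T, X s ^ 2) - (1 / 2) * X T ^ 2 * ∫ s in (0 : ℝ)..T, X s) /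
        (T * Real.exp (θ * T) ^ 2)) atTop (𝓝 (α * (c ^ 2 / (2 * θ)))) := by
  have hsum := (hH.mul (tendsto_integral_sq_div_exp_sq hθ hX hlim)).add
    ((tendsto_integral_div_exp hθ hX hlim).mul
      (tendsto_mul_integral_sq_sub_sq_div_two_div hθ hX hlim hH))
  rw [mul_zero, add_zero] at hsum
  refine hsum.congr' ?_
  filter_upwards [eventually_gt_atTop 0] with T hT
  rw [forcing]
  field_simp
  ring

theorem tendsto_estimator_denom_div (hθ : 0 < θ) (hX : ContinuousOn X (Ici 0))
    (hlim : Tendsto (fun t => X t / Real.exp (θ * t)) atTop (𝓝 c)) :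
    Tendsto (fun T =>
      (T * (∫ s in (0 : ℝ)..T, X s ^ 2) - (∫ s in (0 : ℝ)..T, X s) ^ 2) /
        (T * Real.exp (θ * T) ^ 2)) atTop (𝓝 (c ^ 2 / (2 * θ))) := by
  have hdiff := (tendsto_integral_sq_div_exp_sq hθ hX hlim).sub
    (((tendsto_integral_div_exp hθ hX hlim).pow 2).mul tendsto_inv_atTop_zero)
  rw [mul_zero, sub_zero] at hdiff
  refine hdiff.congr' ?_
  filter_upwards [eventually_gt_atTop 0] with T hT
  field_simp

theorem vasicek_alpha_consistency_general (hθ : 0 < θ) (hc : c ≠ 0) (hX : ContinuousOn X (Ici 0))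
    (hlim : Tendsto (fun t => X t / Real.exp (θ * t)) atTop (𝓝 c))
    (hH : Tendsto (fun T => forcing θ X T / T) atTop (𝓝 α)) :
    Tendsto
      (fun T : ℝ =>
        (X T * (∫ s in (0 : ℝ)..T, X s ^ 2) - (1 / 2) * X T ^ 2 * ∫ s in (0 : ℝ)..T, X s) /
          (T * (∫ s in (0 : ℝ)..T, X s ^ 2) - (∫ s in (0 : ℝ)..T, X s) ^ 2))
      atTop (𝓝 α) := by
  have limit_ne : c ^ 2 / (2 * θ) ≠ 0 := by positivity
  have hquot := (tendsto_estimator_num_div hθ hX hlim hH).div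
    (tendsto_estimator_denom_div hθ hX hlim) limit_ne
  rw [mul_div_cancel_right₀ _ limit_ne] at hquot
  refine hquot.congr' ?_
  filter_upwards [eventually_gt_atTop 0] with T hT
  exact div_div_div_cancel_right₀ (by positivity) _ _

end Estimator

section Vasicek

variable {θ μ : ℝ} {X : ℝ → ℝ}

theorem tendsto_vasicek_div_exp {ζ : ℝ → ℝ} {ζinf : ℝ} (hθ : 0 < θ)
    (hζlim : Tendsto ζ atTop (𝓝 ζinf))
    (hX : ∀ t, 0 ≤ t → X t = μ * (Real.exp (θ * t) - 1) + Real.exp (θ * t) * ζ t) :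
    Tendsto (fun t => X t / Real.exp (θ * t)) atTop (𝓝 (μ + ζinf)) := by
  have inv_exp_lim : Tendsto (fun t => (Real.exp (θ * t))⁻¹) atTop (𝓝 0) :=
    (Real.tendsto_exp_atTop.comp (tendsto_id.const_mul_atTop hθ)).inv_tendsto_atTop
  have hsum := ((inv_exp_lim.const_sub 1).const_mul μ).add hζlim
  rw [sub_zero, mul_one] at hsum
  refine hsum.congr' ?_
  filter_upwards [eventually_ge_atTop 0] with t ht
  rw [hX t ht]
  field_simp

theorem tendsto_forcing_div_of_noise {G : ℝ → ℝ} {α δ : ℝ} (hδ : δ ≤ 1)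
    (hG : ∀ t, G t = X t - α * t - θ * ∫ s in (0 : ℝ)..t, X s)
    (hgrowth : Tendsto (fun T => G T / T ^ δ) atTop (𝓝 0)) :
    Tendsto (fun T => forcing θ X T / T) atTop (𝓝 α) := by
  have hsum := (tendsto_div_id_of_tendsto_div_rpow hδ hgrowth).const_add α
  rw [add_zero] at hsum
  refine hsum.congr' ?_
  filter_upwards [eventually_gt_atTop 0] with T hT
  rw [hG, forcing]
  field_simp
  ring

end Vasicek

theorem vasicek_alpha_consistency (θ μ : ℝ) (hθ : 0 < θ)
    (ζ : ℝ → ℝ) (ζinf : ℝ)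
    (hζcont : ContinuousOn ζ (Set.Ici 0)) (hζ0 : ζ 0 = 0)
    (hζlim : Filter.Tendsto ζ Filter.atTop (nhds ζinf))
    (hne : μ + ζinf ≠ 0)
    (X : ℝ → ℝ)
    (hX : ∀ t, 0 ≤ t → X t = μ * (Real.exp (θ * t) - 1) + Real.exp (θ * t) * ζ t)
    (G : ℝ → ℝ)
    (hG : ∀ t, G t = X t - μ * θ * t - θ * ∫ s in (0:ℝ)..t, X s)
    (hGrowth : ∃ δ ∈ Set.Ioo (0:ℝ) 1,
      Filter.Tendsto (fun T : ℝ => G T / T ^ δ) Filter.atTop (nhds 0)) :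
    Filter.Tendsto
      (fun T : ℝ =>
        (X T * (∫ s in (0:ℝ)..T, (X s) ^ 2)
            - (1 / 2) * (X T) ^ 2 * ∫ s in (0:ℝ)..T, X s) /
          (T * (∫ s in (0:ℝ)..T, (X s) ^ 2) - (∫ s in (0:ℝ)..T, X s) ^ 2))
      Filter.atTop (nhds (μ * θ)) := by
  obtain ⟨δ, hδ, hGδ⟩ := hGrowth
  exact vasicek_alpha_consistency_general hθ hne (ContinuousOn.congr (by fun_prop) hX)
    (tendsto_vasicek_div_exp hθ hζlim hX) (tendsto_forcing_div_of_noise hδ.2.le hG hGδ)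
end
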